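/- For every d ∈ ℕ and every ε > 0 there exists α < 1/2 such that every set E ⊆ ℝ^d with por(E) ≥ α satisfies dim_H(E) ≤ d − 1 + ε. In other words, sup{dim_H(E) : E ⊆ ℝ^d, por(E) ≥ α} → d − 1 as α → 1/2. -/

import Mathlib

open MeasureTheory Filter Metric Set

/-- `por(E,x,r)`: the supremum of `α ≥ 0` such that some ball `B(y,αr)` is contained in
`B(x,r) \ E`. -/
noncomputable def porSet {X : Type*} [MetricSpace X] (E : Set X) (x : X) (r : ℝ) : ℝ :=
  sSup {α : ℝ | 0 ≤ α ∧ ∃ y, Metric.ball y (α * r) ⊆ Metric.ball x r \ E}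

/-- `por(E,x) = liminf_{r→0} por(E,x,r)`. -/
noncomputable def porSetPt {X : Type*} [MetricSpace X] (E : Set X) (x : X) : ℝ :=
  Filter.liminf (fun r : ℝ => porSet E x r) (nhdsWithin 0 (Set.Ioi 0))

/-- `por(E) = inf_{x ∈ E} por(E,x)`. -/
noncomputable def porSetTotal {X : Type*} [MetricSpace X] (E : Set X) : ℝ :=
  sInf ((fun x => porSetPt E x) '' E)

/-!
If `x ∈ E` and `B(x, r) \ E` contains a ball of radius nearly `r / 2`, that ball must nearly touch
both `x` and the boundary of `B(x, r)`. Seen from `x` at a scale `ρ ≪ r` its complement is almost a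
half-space, so up to a small angle all points of `E` at distance between `ρ / k` and `2ρ` from `x`
lie on one side of a hyperplane through `x`. Sort the points of a `ρ / k`-separated subset of
`E ∩ B(z, ρ)` by the normal of that hyperplane, rounded to a fixed finite net of the sphere. Two
points in one class lie on the same side of each other's hyperplanes, so the class is a Lipschitz
graph over a `(d - 1)`-dimensional space and has at most `(5k)^(d - 1)` points. Since the number of
classes does not depend on `k`, iterating the resulting covering bound from scale `ρ` to `ρ / k`
gives dimension at most `d - 1 + ε` once `k` is large.
-/

open scoped ENNReal NNReal Topology RealInnerProductSpace

section CoveringNumber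

variable {X : Type*} [PseudoEMetricSpace X] {A : Set X} {δ ε : ℝ≥0} {M N : ℕ}

theorem exists_finset_isCover_of_externalCoveringNumber_le (h : externalCoveringNumber ε A ≤ N) :
    ∃ C : Finset X, C.card ≤ N ∧ IsCover ε A C := by
  have hlt : externalCoveringNumber ε A < (N + 1 : ℕ) :=
    h.trans_lt (by exact_mod_cast N.lt_succ_self)
  simp only [externalCoveringNumber, iInf_lt_iff] at hlt
  obtain ⟨C, hC, hCN⟩ := hlt
  lift C to Finset X using Set.finite_of_encard_le_coe hCN.le
  rw [Set.encard_coe_eq_coe_finsetCard] at hCN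
  exact ⟨C, Nat.lt_succ_iff.1 (by exact_mod_cast hCN), hC⟩

theorem externalCoveringNumber_le_mul (hδ : externalCoveringNumber δ A ≤ N)
    (hε : ∀ z, externalCoveringNumber ε (A ∩ closedEBall z δ) ≤ M) :
    externalCoveringNumber ε A ≤ (N * M : ℕ) := by
  classical
  obtain ⟨C, hCN, hC⟩ := exists_finset_isCover_of_externalCoveringNumber_le hδ
  choose D hDM hD using fun z => exists_finset_isCover_of_externalCoveringNumber_le (hε z)
  have hcover : IsCover ε A (C.biUnion D : Finset X) := by
    intro x hx
    obtain ⟨z, hz, hxz⟩ := hC hx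
    obtain ⟨y, hy, hxy⟩ := hD z ⟨hx, hxz⟩
    exact ⟨y, Finset.mem_biUnion.2 ⟨z, hz, hy⟩, hxy⟩
  calc externalCoveringNumber ε A
      ≤ (C.biUnion D).card := by
        simpa only [Set.encard_coe_eq_coe_finsetCard] using hcover.externalCoveringNumber_le_encard
    _ ≤ (N * M : ℕ) := by
        exact_mod_cast (Finset.card_biUnion_le_card_mul C D M fun z _ => hDM z).trans
          (Nat.mul_le_mul_right M hCN)

theorem externalCoveringNumber_pow_mul_le {q ρ₀ : ℝ≥0} (hq₀ : 0 < q) (hq₁ : q ≤ 1) (hρ₀ : 0 < ρ₀)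
    (h : ∀ ρ, 0 < ρ → ρ ≤ ρ₀ → ∀ z, externalCoveringNumber (q * ρ) (A ∩ closedEBall z ρ) ≤ M)
    (z : X) (n : ℕ) :
    externalCoveringNumber (q ^ n * ρ₀) (A ∩ closedEBall z ρ₀) ≤ (M ^ n : ℕ) := by
  induction n with
  | zero =>
    have hcover : IsCover ρ₀ (A ∩ closedEBall z ρ₀) {z} := fun x hx => ⟨z, rfl, hx.2⟩
    simpa only [pow_zero, one_mul, Nat.cast_one, Set.encard_singleton] using
      hcover.externalCoveringNumber_le_encard
  | succ n ih =>
    have hle : q ^ n * ρ₀ ≤ ρ₀ := mul_le_of_le_one_left' (pow_le_one₀ hq₀.le hq₁)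
    rw [show q ^ (n + 1) * ρ₀ = q * (q ^ n * ρ₀) by ring, pow_succ]
    exact externalCoveringNumber_le_mul ih fun y =>
      (externalCoveringNumber_mono_set (inter_subset_inter_left _ inter_subset_left)).trans
        (h _ (by positivity) hle y)

theorem packingNumber_le_of_forall_finset
    (h : ∀ S : Finset X, (S : Set X) ⊆ A → IsSeparated ε (S : Set X) → S.card ≤ M) :
    packingNumber ε A ≤ M := by
  refine iSup_le fun C => iSup₂_le fun hCA hC => ?_
  by_contra! hlt
  obtain ⟨S, hSC, hS⟩ := Set.exists_subset_encard_eq (Order.add_one_le_of_lt hlt)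
  lift S to Finset X using Set.finite_of_encard_eq_coe (k := M + 1) hS
  have hcard : S.card = M + 1 := by exact_mod_cast hS
  have := h S (hSC.trans hCA) (hC.subset hSC)
  omega

end CoveringNumber

section HausdorffDimension

variable {X : Type*} [EMetricSpace X] {A : Set X} {t : ℝ≥0}

theorem hausdorffMeasure_le_liminf_of_externalCoveringNumber_le [MeasurableSpace X] [BorelSpace X]
    {ι : Type*} {l : Filter ι} {r : ι → ℝ≥0} {N : ι → ℕ} (hr : Tendsto r l (𝓝 0))
    (hN : ∀ i, externalCoveringNumber (r i) A ≤ N i) :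
    μH[t] A ≤ liminf (fun i => (N i : ℝ≥0∞) * (2 * r i) ^ (t : ℝ)) l := by
  choose C hCN hC using fun i => exists_finset_isCover_of_externalCoveringNumber_le (hN i)
  have hr' : Tendsto (fun i => 2 * (r i : ℝ≥0∞)) l (𝓝 0) := by
    simpa using ENNReal.Tendsto.const_mul (ENNReal.tendsto_coe.2 hr) (.inr ENNReal.ofNat_ne_top)
  have hsub (i) : A ⊆ ⋃ c : C i, closedEBall (c : X) (r i) := fun x hx =>
    let ⟨c, hc, hxc⟩ := hC i hx
    mem_iUnion.2 ⟨⟨c, hc⟩, hxc⟩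
  refine (Measure.hausdorffMeasure_le_liminf_sum t A _ hr' (fun i (c : C i) => closedEBall c (r i))
    (.of_forall fun i c => ediam_closedEBall_le) (.of_forall hsub)).trans
    (liminf_le_liminf (.of_forall fun i => ?_))
  calc ∑ c : C i, ediam (closedEBall (c : X) (r i)) ^ (t : ℝ)
      ≤ ∑ _c : C i, (2 * r i : ℝ≥0∞) ^ (t : ℝ) := by
        gcongr; exact ediam_closedEBall_le
    _ = (C i).card * (2 * r i : ℝ≥0∞) ^ (t : ℝ) := by simp
    _ ≤ N i * (2 * r i : ℝ≥0∞) ^ (t : ℝ) := by gcongr; exact hCN i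

theorem dimH_le_of_externalCoveringNumber_pow_mul_le {q ρ₀ : ℝ≥0} {M : ℕ} (hq : q < 1)
    (hMt : M * q ^ (t : ℝ) ≤ 1)
    (h : ∀ n : ℕ, externalCoveringNumber (q ^ n * ρ₀) A ≤ (M ^ n : ℕ)) :
    dimH A ≤ t := by
  borelize X
  have hlim : Tendsto (fun n : ℕ => q ^ n * ρ₀) atTop (𝓝 0) := by
    simpa using (NNReal.tendsto_pow_atTop_nhds_zero_of_lt_one hq).mul_const ρ₀
  have hbound (n : ℕ) :
      ((M ^ n : ℕ) : ℝ≥0∞) * (2 * (q ^ n * ρ₀ : ℝ≥0)) ^ (t : ℝ) ≤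
        ((2 * ρ₀) ^ (t : ℝ) : ℝ≥0) := by
    have : (M ^ n : ℝ≥0) * (2 * (q ^ n * ρ₀)) ^ (t : ℝ) ≤ (2 * ρ₀) ^ (t : ℝ) :=
      calc (M ^ n : ℝ≥0) * (2 * (q ^ n * ρ₀)) ^ (t : ℝ)
          = (M * q ^ (t : ℝ)) ^ n * (2 * ρ₀) ^ (t : ℝ) := by
            rw [mul_left_comm, NNReal.mul_rpow, mul_pow, ← NNReal.rpow_natCast_mul,
              mul_comm (n : ℝ), NNReal.rpow_mul_natCast, mul_assoc]
        _ ≤ (2 * ρ₀) ^ (t : ℝ) := mul_le_of_le_one_left' (pow_le_one₀ zero_le hMt)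
    rw [← ENNReal.coe_ofNat, ← ENNReal.coe_mul, ← ENNReal.coe_rpow_of_nonneg _ t.coe_nonneg]
    exact_mod_cast this
  refine dimH_le_of_hausdorffMeasure_ne_top
    (ne_top_of_le_ne_top (b := ((2 * ρ₀) ^ (t : ℝ) : ℝ≥0)) ENNReal.coe_ne_top ?_)
  calc μH[t] A
      ≤ liminf (fun n : ℕ => ((M ^ n : ℕ) : ℝ≥0∞) * (2 * (q ^ n * ρ₀ : ℝ≥0)) ^ (t : ℝ)) atTop :=
        hausdorffMeasure_le_liminf_of_externalCoveringNumber_le hlim h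
    _ ≤ liminf (fun _ : ℕ => (((2 * ρ₀) ^ (t : ℝ) : ℝ≥0) : ℝ≥0∞)) atTop :=
        liminf_le_liminf (.of_forall hbound)
    _ = _ := liminf_const _

theorem dimH_le_of_forall_dimH_inter_closedEBall_le [SecondCountableTopology X] {ρ : ℝ≥0∞}
    (hρ : 0 < ρ) {s : ℝ≥0∞} (h : ∀ z, dimH (A ∩ closedEBall z ρ) ≤ s) : dimH A ≤ s := by
  by_contra! hlt
  obtain ⟨x, -, hx⟩ := exists_mem_nhdsWithin_lt_dimH_of_lt_dimH hlt
  exact (h x).not_gt (hx _ (inter_mem self_mem_nhdsWithin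
    (mem_nhdsWithin_of_mem_nhds (closedEBall_mem_nhds x hρ))))

theorem dimH_le_of_forall_externalCoveringNumber_mul_le [SecondCountableTopology X] {q ρ₀ : ℝ≥0}
    {M : ℕ} (hq₀ : 0 < q) (hq₁ : q < 1) (hρ₀ : 0 < ρ₀) (hMt : M * q ^ (t : ℝ) ≤ 1)
    (h : ∀ ρ, 0 < ρ → ρ ≤ ρ₀ → ∀ z, externalCoveringNumber (q * ρ) (A ∩ closedEBall z ρ) ≤ M) :
    dimH A ≤ t :=
  dimH_le_of_forall_dimH_inter_closedEBall_le (ENNReal.coe_pos.2 hρ₀) fun z =>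
    dimH_le_of_externalCoveringNumber_pow_mul_le hq₁ hMt
      (externalCoveringNumber_pow_mul_le hq₀ hq₁.le hρ₀ h z)

end HausdorffDimension

theorem card_le_of_pairwise_le_dist {ι F : Type*} [NormedAddCommGroup F] [NormedSpace ℝ F]
    [FiniteDimensional ℝ F] {S : Finset ι} {p : ι → F} {z : F} {ρ s : ℝ} (hρ : 0 ≤ ρ) (hs : 0 < s)
    (hz : ∀ i ∈ S, dist (p i) z ≤ ρ)
    (hsep : (S : Set ι).Pairwise fun i j => s ≤ dist (p i) (p j)) :
    (S.card : ℝ) ≤ (2 * ρ / s + 1) ^ Module.finrank ℝ F := by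
  borelize F
  let μ : Measure F := Measure.addHaar
  set n := Module.finrank ℝ F
  have hball {r : ℝ} (hr : 0 < r) (x : F) : μ.real (ball x r) = r ^ n * μ.real (ball 0 1) := by
    rw [measureReal_def, μ.addHaar_ball_of_pos x hr, ENNReal.toReal_mul,
      ENNReal.toReal_ofReal (by positivity), measureReal_def]
  have hμ : 0 < μ.real (ball 0 1) :=
    ENNReal.toReal_pos (measure_ball_pos μ _ one_pos).ne' measure_ball_lt_top.ne
  have hdisj : (S : Set ι).PairwiseDisjoint fun i => ball (p i) (s / 2) :=
    hsep.mono' fun i j hij => ball_disjoint_ball (by linarith)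
  have hsub : (⋃ i ∈ S, ball (p i) (s / 2)) ⊆ ball z (ρ + s / 2) :=
    iUnion₂_subset fun i hi => ball_subset_ball' (by linarith [hz i hi])
  have hvol : S.card * (s / 2) ^ n ≤ (ρ + s / 2) ^ n := by
    refine le_of_mul_le_mul_right ?_ hμ
    calc S.card * (s / 2) ^ n * μ.real (ball 0 1)
        = μ.real (⋃ i ∈ S, ball (p i) (s / 2)) := by
          rw [measureReal_biUnion_finset hdisj (fun _ _ => measurableSet_ball)]
          simp only [hball (half_pos hs), Finset.sum_const, nsmul_eq_mul, mul_assoc]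
      _ ≤ μ.real (ball z (ρ + s / 2)) := measureReal_mono hsub
      _ = (ρ + s / 2) ^ n * μ.real (ball 0 1) := hball (by positivity) z
  calc (S.card : ℝ) ≤ (ρ + s / 2) ^ n / (s / 2) ^ n := (le_div_iff₀ (by positivity)).2 hvol
    _ = (2 * ρ / s + 1) ^ n := by rw [← div_pow]; congr 1; field_simp

section InnerProductSpace

variable {V : Type*} [NormedAddCommGroup V] [InnerProductSpace ℝ V]

theorem norm_le_two_mul_norm_orthogonalProjectionOnto {e v : V} (he : ‖e‖ = 1)
    (hv : |⟪v, e⟫| ≤ ‖v‖ / 2) : ‖v‖ ≤ 2 * ‖(ℝ ∙ e)ᗮ.orthogonalProjectionOnto v‖ := by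
  have hpyth := Submodule.norm_sq_eq_add_norm_sq_projection v (ℝ ∙ e)
  have hline : ‖(ℝ ∙ e).orthogonalProjectionOnto v‖ = |⟪v, e⟫| := by
    rw [Submodule.coe_norm, ← Submodule.starProjection_apply,
      Submodule.starProjection_unit_singleton ℝ he, norm_smul, he, mul_one, real_inner_comm,
      Real.norm_eq_abs]
  rw [hline] at hpyth
  refine le_of_sq_le_sq ?_ (by positivity)
  nlinarith [pow_le_pow_left₀ (abs_nonneg _) hv 2]

theorem card_le_of_pairwise_inner_le [FiniteDimensional ℝ V] {S : Finset V} {e z : V} {ρ s : ℝ}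
    (he : ‖e‖ = 1) (hρ : 0 ≤ ρ) (hs : 0 < s) (hz : ∀ a ∈ S, dist a z ≤ ρ)
    (hsep : (S : Set V).Pairwise fun a b => s ≤ dist a b)
    (hcone : (S : Set V).Pairwise fun a b => ⟪a - b, e⟫ ≤ ‖a - b‖ / 2) :
    (S.card : ℝ) ≤ (4 * ρ / s + 1) ^ (Module.finrank ℝ V - 1) := by
  have he₀ : e ≠ 0 := by rintro rfl; simp at he
  have hdim : Module.finrank ℝ (ℝ ∙ e)ᗮ = Module.finrank ℝ V - 1 := by
    have := (ℝ ∙ e).finrank_add_finrank_orthogonal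
    rw [finrank_span_singleton he₀] at this
    omega
  let P := (ℝ ∙ e)ᗮ.orthogonalProjectionOnto
  have hPz : ∀ a ∈ S, dist (P a) (P z) ≤ ρ := fun a ha => by
    simpa using ((ℝ ∙ e)ᗮ.lipschitzWith_orthogonalProjectionOnto.dist_le_mul a z).trans
      (by simpa using hz a ha)
  have hPsep : (S : Set V).Pairwise fun a b => s / 2 ≤ dist (P a) (P b) := by
    intro a ha b hb hab
    have habs : |⟪a - b, e⟫| ≤ ‖a - b‖ / 2 := by
      refine abs_le'.2 ⟨hcone ha hb hab, ?_⟩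
      rw [← inner_neg_left, neg_sub, norm_sub_rev]
      exact hcone hb ha hab.symm
    have hproj := norm_le_two_mul_norm_orthogonalProjectionOnto he habs
    have hdist : s ≤ ‖a - b‖ := dist_eq_norm a b ▸ hsep ha hb hab
    rw [dist_eq_norm, ← map_sub]
    linarith
  calc (S.card : ℝ) ≤ (2 * ρ / (s / 2) + 1) ^ Module.finrank ℝ (ℝ ∙ e)ᗮ :=
        card_le_of_pairwise_le_dist hρ (half_pos hs) hPz hPsep
    _ = (4 * ρ / s + 1) ^ (Module.finrank ℝ V - 1) := by rw [hdim]; congr 1; field_simp; ring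

theorem inner_inv_norm_smul_le {v w : V} {r s : ℝ} (hs : 0 < s) (hw : s ≤ ‖w‖)
    (hwr : ‖w‖ + s ≤ r) (hv : s ≤ ‖v - w‖) :
    ⟪v, ‖w‖⁻¹ • w⟫ ≤ (‖v‖ ^ 2 + r * (r - 2 * s)) / (2 * s) := by
  have hinner : 2 * ⟪v, w⟫ ≤ ‖v‖ ^ 2 + r * (r - 2 * s) := by
    have hpolar := norm_sub_sq_real v w
    have hfar : s ^ 2 ≤ ‖v - w‖ ^ 2 := pow_le_pow_left₀ hs.le hv 2
    have hnear : ‖w‖ ^ 2 ≤ (r - s) ^ 2 :=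
      pow_le_pow_left₀ (norm_nonneg w) (le_sub_right_of_add_le hwr) 2
    linarith
  have hnonneg : 0 ≤ ‖v‖ ^ 2 + r * (r - 2 * s) := by
    have : 0 ≤ r - 2 * s := by linarith
    have : 0 ≤ r := by linarith
    positivity
  rw [inner_smul_right, inv_mul_eq_div]
  calc ⟪v, w⟫ / ‖w‖ = 2 * ⟪v, w⟫ / (2 * ‖w‖) := by rw [mul_div_mul_left _ _ two_ne_zero]
    _ ≤ (‖v‖ ^ 2 + r * (r - 2 * s)) / (2 * ‖w‖) := by gcongr
    _ ≤ (‖v‖ ^ 2 + r * (r - 2 * s)) / (2 * s) := by gcongr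

end InnerProductSpace

theorem dist_add_le_of_ball_subset_ball {F : Type*} [NormedAddCommGroup F] [NormedSpace ℝ F]
    {x y : F} {r s : ℝ} (hs : 0 < s) (hxy : y ≠ x) (h : ball y s ⊆ ball x r) :
    dist y x + s ≤ r := by
  have hr : 0 < r := pos_of_mem_ball (h (mem_ball_self hs))
  have hpos : 0 < ‖y - x‖ := norm_sub_pos_iff.2 hxy
  have hclosed : closedBall y s ⊆ closedBall x r := by
    rw [← closure_ball y hs.ne', ← closure_ball x hr.ne']
    exact closure_mono h
  have hfar : y + (s / ‖y - x‖) • (y - x) ∈ closedBall x r := hclosed <| by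
    rw [mem_closedBall, dist_self_add_left, norm_smul, norm_div, norm_norm,
      div_mul_cancel₀ _ hpos.ne', Real.norm_of_nonneg hs.le]
  have hsmul : y + (s / ‖y - x‖) • (y - x) - x = (1 + s / ‖y - x‖) • (y - x) := by module
  rwa [mem_closedBall, dist_eq_norm, hsmul, norm_smul, Real.norm_of_nonneg (by positivity),
    add_mul, one_mul, div_mul_cancel₀ _ hpos.ne', ← dist_eq_norm] at hfar

section Porosity

variable {X : Type*} [MetricSpace X] {E A : Set X} {β R : ℝ}

theorem porSet_nonneg (E : Set X) (x : X) (r : ℝ) : 0 ≤ porSet E x r :=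
  Real.sSup_nonneg fun _ h => h.1

theorem exists_ball_subset_of_lt_porSet {x : X} {r : ℝ} (hr : 0 ≤ r) (hβ : β < porSet E x r) :
    ∃ y, ball y (β * r) ⊆ ball x r \ E := by
  obtain ⟨γ, ⟨-, y, hy⟩, hγ⟩ := exists_lt_of_lt_csSup (⟨0, le_rfl, x, by simp⟩ :
    {γ : ℝ | 0 ≤ γ ∧ ∃ y, ball y (γ * r) ⊆ ball x r \ E}.Nonempty) hβ
  exact ⟨y, (ball_subset_ball (by gcongr)).trans hy⟩

theorem eventually_exists_ball_subset_of_lt_porSetPt {x : X} (hβ : β < porSetPt E x) :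
    ∀ᶠ r in 𝓝[>] (0 : ℝ), ∃ y, ball y (β * r) ⊆ ball x r \ E := by
  filter_upwards [eventually_lt_of_lt_liminf hβ (isBoundedUnder_of ⟨0, porSet_nonneg E x⟩),
    self_mem_nhdsWithin] with r hβr hr
  exact exists_ball_subset_of_lt_porSet (le_of_lt hr) hβr

theorem porSetPt_nonneg (E : Set X) (x : X) : 0 ≤ porSetPt E x := by
  rw [porSetPt, liminf_eq]
  exact Real.sSup_nonneg' ⟨0, by simp [porSet_nonneg], le_rfl⟩

theorem porSetTotal_le_porSetPt {x : X} (hx : x ∈ E) : porSetTotal E ≤ porSetPt E x :=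
  csInf_le ⟨0, forall_mem_image.2 fun y _ => porSetPt_nonneg E y⟩ (mem_image_of_mem _ hx)

/-- Uniform porosity: every ball of radius `r < R` centred on `A` contains a ball of radius `β * r`
that misses `A`. Unlike `porSet`, both the proportion `β` and the range of scales are the same at
all points of `A`, which is what a multiscale covering argument requires. -/
def IsUniformlyPorous (A : Set X) (β R : ℝ) : Prop :=
  ∀ x ∈ A, ∀ r ∈ Ioo 0 R, ∃ y, ball y (β * r) ⊆ ball x r \ A

theorem exists_subset_iUnion_isUniformlyPorous (hβ : β < porSetTotal E) :
    ∃ A : ℕ → Set X, E ⊆ ⋃ n, A n ∧ ∀ n, IsUniformlyPorous (A n) β (1 / (n + 1)) := by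
  refine ⟨fun n => {x ∈ E | ∀ r ∈ Ioo (0 : ℝ) (1 / (n + 1)), ∃ y, ball y (β * r) ⊆ ball x r \ E},
    fun x hx => ?_, fun n x hx r hr => ?_⟩
  · obtain ⟨η, hη, hball⟩ := mem_nhdsGT_iff_exists_Ioo_subset.1
      (eventually_exists_ball_subset_of_lt_porSetPt (hβ.trans_le (porSetTotal_le_porSetPt hx)))
    obtain ⟨n, hn⟩ := exists_nat_one_div_lt (mem_Ioi.1 hη)
    exact mem_iUnion.2 ⟨n, hx, fun r hr => hball ⟨hr.1, hr.2.trans hn⟩⟩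
  · obtain ⟨y, hy⟩ := hx.2 r hr
    exact ⟨y, hy.trans (sdiff_subset_sdiff_right fun a ha => ha.1)⟩

end Porosity

theorem exists_nat_mul_pow_le_rpow (C : ℝ≥0) {m : ℕ} {t : ℝ} (ht : m < t) :
    ∃ k : ℕ, 1 < k ∧ C * (k : ℝ≥0) ^ m ≤ (k : ℝ≥0) ^ t := by
  have hlim : Tendsto (fun k : ℕ => (k : ℝ≥0) ^ (t - m)) atTop atTop :=
    (NNReal.tendsto_rpow_atTop (sub_pos.2 ht)).comp tendsto_natCast_atTop_atTop
  obtain ⟨k, hk, hC⟩ := ((eventually_gt_atTop 1).and (hlim.eventually_ge_atTop C)).exists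
  refine ⟨k, hk, ?_⟩
  have hk₀ : (k : ℝ≥0) ≠ 0 := by positivity
  calc C * (k : ℝ≥0) ^ m ≤ (k : ℝ≥0) ^ (t - m) * (k : ℝ≥0) ^ m := by gcongr
    _ = (k : ℝ≥0) ^ t := by rw [← NNReal.rpow_natCast, ← NNReal.rpow_add hk₀, sub_add_cancel]

section UniformPorosity

variable {V : Type*} [NormedAddCommGroup V] [InnerProductSpace ℝ V] {A : Set V} {R : ℝ}

theorem exists_unit_inner_le_of_ball_subset {x y : V} {r s : ℝ} (hs : 0 < s) (hx : x ∈ A)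
    (hy : ball y s ⊆ ball x r \ A) :
    ∃ e : V, ‖e‖ = 1 ∧
      ∀ a ∈ A, ⟪a - x, e⟫ ≤ (‖a - x‖ ^ 2 + r * (r - 2 * s)) / (2 * s) := by
  have hout : ∀ a ∈ A, s ≤ ‖a - y‖ := fun a ha => by
    rw [← dist_eq_norm]
    exact not_lt.1 fun h => (hy h).2 ha
  have hw : s ≤ ‖y - x‖ := norm_sub_rev x y ▸ hout x hx
  have hne : y - x ≠ 0 := norm_pos_iff.1 (hs.trans_le hw)
  have hwr : ‖y - x‖ + s ≤ r := by
    rw [← dist_eq_norm]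
    exact dist_add_le_of_ball_subset_ball hs (sub_ne_zero.1 hne) (hy.trans sdiff_subset)
  refine ⟨‖y - x‖⁻¹ • (y - x), norm_smul_inv_norm hne, fun a ha => ?_⟩
  exact inner_inv_norm_smul_le hs hw hwr (by simpa using hout a ha)

theorem IsUniformlyPorous.exists_unit_inner_le {k : ℕ} (hk : 0 < k)
    (hA : IsUniformlyPorous A (1 / 2 - 1 / (1024 * k)) R) {x : V} (hx : x ∈ A) {ρ : ℝ}
    (hρ : 0 < ρ) (hρR : 32 * ρ < R) :
    ∃ e : V, ‖e‖ = 1 ∧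
      ∀ a ∈ A, ρ / k ≤ ‖a - x‖ → ‖a - x‖ ≤ 2 * ρ → ⟪a - x, e⟫ ≤ ‖a - x‖ / 4 := by
  have hk₁ : (1 : ℝ) ≤ k := by exact_mod_cast hk
  set δ : ℝ := 1 / (1024 * k) with hδ
  have hδ₁ : δ ≤ 1 / 4 := by
    rw [hδ]
    exact one_div_le_one_div_of_le (by norm_num) (by linarith)
  obtain ⟨y, hy⟩ := hA x hx (32 * ρ) ⟨by positivity, hρR⟩
  have hs : 8 * ρ ≤ (1 / 2 - δ) * (32 * ρ) := by nlinarith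
  obtain ⟨e, he, hinner⟩ := exists_unit_inner_le_of_ball_subset (by linarith) hx hy
  refine ⟨e, he, fun a ha hlow hhigh => (hinner a ha).trans ?_⟩
  -- With `r = 32 * ρ` and `s ≈ r / 2`, the two terms of the bound are about
  -- `‖a - x‖ ^ 2 / r ≤ ‖a - x‖ / 16` and `r / (512 * k) = ρ / (16 * k) ≤ ‖a - x‖ / 16`.
  have hδρ : 2048 * δ * ρ ^ 2 ≤ 2 * ρ * ‖a - x‖ := by
    have : 2048 * δ * ρ ^ 2 = 2 * ρ * (ρ / k) := by rw [hδ]; field_simp; norm_num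
    rw [this]
    gcongr
  have hsq : ‖a - x‖ ^ 2 ≤ 2 * ρ * ‖a - x‖ := by rw [sq]; gcongr
  rw [div_le_iff₀ (by linarith)]
  nlinarith [norm_nonneg (a - x)]

theorem IsUniformlyPorous.exists_mem_inner_le {T : Set V} (hcover : IsCover 4⁻¹ (sphere 0 1) T)
    {k : ℕ} (hk : 0 < k) (hA : IsUniformlyPorous A (1 / 2 - 1 / (1024 * k)) R) {x : V}
    (hx : x ∈ A) {ρ : ℝ} (hρ : 0 < ρ) (hρR : 32 * ρ < R) :
    ∃ u ∈ T, ∀ a ∈ A, ρ / k ≤ ‖a - x‖ → ‖a - x‖ ≤ 2 * ρ → ⟪a - x, u⟫ ≤ ‖a - x‖ / 2 := by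
  obtain ⟨e, he, hinner⟩ := hA.exists_unit_inner_le hk hx hρ hρR
  obtain ⟨u, hu, heu⟩ := hcover (mem_sphere_zero_iff_norm.2 he)
  have hue : ‖u - e‖ ≤ 1 / 4 := by
    have hdist : dist e u ≤ (4⁻¹ : ℝ≥0) := edist_le_coe.1 heu
    rw [← dist_eq_norm, dist_comm]
    simpa using hdist
  refine ⟨u, hu, fun a ha hlow hhigh => ?_⟩
  calc ⟪a - x, u⟫ = ⟪a - x, e⟫ + ⟪a - x, u - e⟫ := by rw [inner_sub_right]; ring
    _ ≤ ‖a - x‖ / 4 + ‖a - x‖ * (1 / 4) := by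
      gcongr
      · exact hinner a ha hlow hhigh
      · exact (real_inner_le_norm _ _).trans (by gcongr)
    _ = ‖a - x‖ / 2 := by ring

variable [FiniteDimensional ℝ V] {T : Finset V} {k : ℕ}

theorem IsUniformlyPorous.card_le_of_isSeparated (hT : (T : Set V) ⊆ sphere 0 1)
    (hcover : IsCover 4⁻¹ (sphere 0 1) (T : Set V)) (hk : 0 < k)
    (hA : IsUniformlyPorous A (1 / 2 - 1 / (1024 * k)) R) {ρ : ℝ} (hρ : 0 < ρ) (hρR : 32 * ρ < R)
    {z : V} {S : Finset V} (hSA : (S : Set V) ⊆ A) (hz : ∀ a ∈ S, dist a z ≤ ρ)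
    (hsep : (S : Set V).Pairwise fun a b => ρ / k ≤ dist a b) :
    S.card ≤ (5 * k) ^ (Module.finrank ℝ V - 1) * T.card := by
  classical
  have hdir (x : V) (hx : x ∈ S) :
      ∃ u ∈ T, ∀ a ∈ S, a ≠ x → ⟪a - x, u⟫ ≤ ‖a - x‖ / 2 := by
    obtain ⟨u, hu, hinner⟩ := hA.exists_mem_inner_le hcover hk (hSA hx) hρ hρR
    refine ⟨u, hu, fun a ha hax => hinner a (hSA ha) ?_ ?_⟩ <;> rw [← dist_eq_norm]
    · exact hsep ha hx hax
    · linarith [dist_triangle_right a x z, hz a ha, hz x hx]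
  choose! u huT hu using hdir
  refine Finset.card_le_mul_card_image_of_maps_to huT _ fun w hw => ?_
  have hfiber : ((S.filter (u · = w)).card : ℝ) ≤
      (4 * ρ / (ρ / k) + 1) ^ (Module.finrank ℝ V - 1) := by
    refine card_le_of_pairwise_inner_le (mem_sphere_zero_iff_norm.1 (hT hw)) hρ.le (by positivity)
      (fun a ha => hz a (Finset.mem_of_mem_filter a ha))
      (hsep.mono (Finset.coe_subset.2 (S.filter_subset _))) fun a ha b hb hab => ?_
    obtain ⟨hbS, rfl⟩ := Finset.mem_filter.1 hb
    exact hu b hbS a (Finset.mem_of_mem_filter a ha) hab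
  have hratio : 4 * ρ / (ρ / k) + 1 ≤ 5 * k := by
    have hk₁ : (1 : ℝ) ≤ k := by exact_mod_cast hk
    have : 4 * ρ / (ρ / k) = 4 * k := by field_simp
    linarith
  exact_mod_cast hfiber.trans (pow_le_pow_left₀ (by positivity) hratio _)

theorem IsUniformlyPorous.externalCoveringNumber_le (hT : (T : Set V) ⊆ sphere 0 1)
    (hcover : IsCover 4⁻¹ (sphere 0 1) (T : Set V)) (hk : 0 < k)
    (hA : IsUniformlyPorous A (1 / 2 - 1 / (1024 * k)) R) {ρ : ℝ≥0} (hρ : 0 < ρ)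
    (hρR : 32 * ρ < R) (z : V) :
    externalCoveringNumber ((k : ℝ≥0)⁻¹ * ρ) (A ∩ closedEBall z ρ) ≤
      ((5 * k) ^ (Module.finrank ℝ V - 1) * T.card : ℕ) := by
  refine (externalCoveringNumber_le_coveringNumber _ _).trans
    ((coveringNumber_le_packingNumber _ _).trans
      (packingNumber_le_of_forall_finset fun S hS hsep => ?_))
  refine hA.card_le_of_isSeparated hT hcover hk (NNReal.coe_pos.2 hρ) hρR (z := z)
    (hS.trans inter_subset_left) (fun a ha => ?_) (hsep.mono' fun a b hab => ?_)
  · simpa using (hS ha).2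
  · rw [edist_nndist, ENNReal.coe_lt_coe, ← NNReal.coe_lt_coe] at hab
    simpa [div_eq_inv_mul] using hab.le

theorem exists_lt_half_forall_isUniformlyPorous_dimH_le {t : ℝ≥0}
    (ht : (Module.finrank ℝ V - 1 : ℕ) < (t : ℝ)) :
    ∃ β < (1 / 2 : ℝ), ∀ (A : Set V) (R : ℝ), 0 < R → IsUniformlyPorous A β R → dimH A ≤ t := by
  obtain ⟨T, hT, hTfin, hcover⟩ :=
    exists_finite_isCover_of_isCompact (ε := 4⁻¹) (by norm_num) (isCompact_sphere (0 : V) 1)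
  lift T to Finset V using hTfin
  set m := Module.finrank ℝ V - 1
  obtain ⟨k, hk, hkt⟩ := exists_nat_mul_pow_le_rpow (5 ^ m * T.card) ht
  have hk₀ : (0 : ℝ≥0) < k := by positivity
  refine ⟨1 / 2 - 1 / (1024 * k), sub_lt_self _ (by positivity), fun A R hR hA => ?_⟩
  have hMt : (((5 * k) ^ m * T.card : ℕ) : ℝ≥0) * (k : ℝ≥0)⁻¹ ^ (t : ℝ) ≤ 1 := by
    rw [NNReal.inv_rpow, ← div_eq_mul_inv]
    refine div_le_one_of_le₀ (le_trans (le_of_eq ?_) hkt) zero_le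
    push_cast
    ring
  lift R to ℝ≥0 using hR.le
  have hR₀ : 0 < R := NNReal.coe_pos.1 hR
  refine dimH_le_of_forall_externalCoveringNumber_mul_le (ρ₀ := R / 64) (inv_pos.2 hk₀)
    (inv_lt_one_of_one_lt₀ (by exact_mod_cast hk)) (by positivity) hMt fun ρ hρ hρR =>
      hA.externalCoveringNumber_le hT hcover (zero_lt_one.trans hk) hρ ?_
  have : (ρ : ℝ) ≤ R / 64 := by exact_mod_cast hρR
  linarith

end UniformPorosity

theorem stmt18_general (V : Type*) [NormedAddCommGroup V] [InnerProductSpace ℝ V]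
    [FiniteDimensional ℝ V] [Nontrivial V] (ε : ℝ) (hε : 0 < ε) :
    ∃ α : ℝ, α < 1 / 2 ∧
      ∀ E : Set V, α ≤ porSetTotal E →
        (dimH E : EReal) ≤ (((Module.finrank ℝ V : ℝ) - 1 + ε : ℝ) : EReal) := by
  have hdim : ((Module.finrank ℝ V - 1 : ℕ) : ℝ) = (Module.finrank ℝ V : ℝ) - 1 :=
    Nat.cast_pred Module.finrank_pos
  rw [← hdim]
  lift ((Module.finrank ℝ V - 1 : ℕ) + ε : ℝ) to ℝ≥0 using by positivity with t ht
  obtain ⟨β, hβ, hporous⟩ :=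
    exists_lt_half_forall_isUniformlyPorous_dimH_le (V := V) (t := t) (by linarith)
  obtain ⟨α, hβα, hα⟩ := exists_between hβ
  refine ⟨α, hα, fun E hE => ?_⟩
  obtain ⟨A, hEA, hA⟩ := exists_subset_iUnion_isUniformlyPorous (hβα.trans_le hE)
  have hle : dimH E ≤ t :=
    calc dimH E ≤ dimH (⋃ n, A n) := dimH_mono hEA
      _ = ⨆ n, dimH (A n) := dimH_iUnion A
      _ ≤ t := iSup_le fun n => hporous _ _ (by positivity) (hA n)
  exact EReal.coe_ennreal_le_coe_ennreal_iff.2 hle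

/-- (Mattila.) For every `d` and every `ε > 0` there is `α < 1/2` such
that every set `E ⊆ ℝ^d` with `por(E) ≥ α` has Hausdorff dimension at most `d − 1 + ε`;
i.e. `sup{dim_H E : por(E) ≥ α} → d − 1` as `α → 1/2`. -/
theorem stmt18 (d : ℕ) (hd : 0 < d) (ε : ℝ) (hε : 0 < ε) :
    ∃ α : ℝ, α < 1 / 2 ∧
      ∀ E : Set (EuclideanSpace ℝ (Fin d)), α ≤ porSetTotal E →
        (dimH E : EReal) ≤ (((d : ℝ) - 1 + ε : ℝ) : EReal) := by
  have : NeZero d := ⟨hd.ne'⟩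
  simpa only [finrank_euclideanSpace_fin] using stmt18_general (EuclideanSpace ℝ (Fin d)) ε hε
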